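/- Let H be an ordered bipartite graph and let c > 1 be a real number. If there is a constant C₁ such that ex(n, A_H) ≤ C₁ · n^c for all positive integers n, then there is a constant C₂ such that ex_<(n, H) ≤ C₂ · n^c for all positive integers n. -/

import Mathlib

/-- A zero-one matrix `M` contains a zero-one matrix `A` if there are strictly increasing
injections of rows and columns such that every 1-entry of `A` corresponds to a 1-entry of `M`. -/
def matContains {m n a b : ℕ} (M : Fin m → Fin n → Bool) (A : Fin a → Fin b → Bool) : Prop :=
  ∃ f : Fin a → Fin m, ∃ g : Fin b → Fin n, StrictMono f ∧ StrictMono g ∧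
    ∀ i j, A i j = true → M (f i) (g j) = true

/-- The weight of a zero-one matrix: its number of 1-entries. -/
def matWeight {m n : ℕ} (M : Fin m → Fin n → Bool) : ℕ :=
  (Finset.univ.filter fun p : Fin m × Fin n => M p.1 p.2 = true).card

/-- The matrix extremal number `ex(n, A)`. -/
noncomputable def matEx {a b : ℕ} (n : ℕ) (A : Fin a → Fin b → Bool) : ℕ :=
  sSup {w : ℕ | ∃ M : Fin n → Fin n → Bool, ¬ matContains M A ∧ matWeight M = w}

/-- An ordered graph `G` on `Fin m` contains the ordered graph `H` on `Fin h` as an ordered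
subgraph if there is an order-preserving injective graph homomorphism from `H` to `G`. -/
def ordContains {m h : ℕ} (G : SimpleGraph (Fin m)) (H : SimpleGraph (Fin h)) : Prop :=
  ∃ f : Fin h → Fin m, StrictMono f ∧ ∀ u v, H.Adj u v → G.Adj (f u) (f v)

/-- The ordered extremal number `ex_<(n, H)`. -/
noncomputable def ordEx {h : ℕ} (n : ℕ) (H : SimpleGraph (Fin h)) : ℕ :=
  sSup {e : ℕ | ∃ G : SimpleGraph (Fin n), ¬ ordContains G H ∧ G.edgeSet.ncard = e}

open Classical in
/-- The zero-one matrix `A_H` of an ordered bipartite graph `H` on `Fin h` with vertex classes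
`X = {v : v < x}` and `Y = {v : x ≤ v}`. -/
noncomputable def AH (h x : ℕ) (hx : x ≤ h) (H : SimpleGraph (Fin h)) :
    Fin x → Fin (h - x) → Bool :=
  fun i j => decide (H.Adj ⟨(i : ℕ), lt_of_lt_of_le i.isLt hx⟩
    ⟨x + (j : ℕ), by have := j.isLt; omega⟩)

open Classical in
noncomputable def cntPairs (r : ℕ → ℕ → Prop) (s k : ℕ) : Finset (ℕ × ℕ) :=
  ((Finset.Ico s (s + k)) ×ˢ (Finset.Ico s (s + k))).filter fun p => p.1 < p.2 ∧ r p.1 p.2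

def natAdj {n : ℕ} (G : SimpleGraph (Fin n)) (i j : ℕ) : Prop :=
  ∃ (hi : i < n) (hj : j < n), G.Adj ⟨i, hi⟩ ⟨j, hj⟩

lemma matWeight_le_matEx {a b n : ℕ} (A : Fin a → Fin b → Bool) (M : Fin n → Fin n → Bool)
    (hM : ¬ matContains M A) : matWeight M ≤ matEx n A := by
  apply le_csSup
  · refine ⟨n * n, ?_⟩
    rintro w ⟨M, -, rfl⟩
    unfold matWeight
    refine (Finset.card_le_univ _).trans ?_
    simp
  · exact ⟨M, hM, rfl⟩

open Classical in
lemma cross_le (h x : ℕ) (hx : x ≤ h) (H : SimpleGraph (Fin h))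
    (hbip : ∀ u v : Fin h, H.Adj u v → u < v → (u : ℕ) < x ∧ x ≤ (v : ℕ))
    {n : ℕ} (G : SimpleGraph (Fin n)) (hG : ¬ ordContains G H)
    (s t m : ℕ) (hst : s + m ≤ t) (htn : t + m ≤ n) :
    (((Finset.Ico s (s + m)) ×ˢ (Finset.Ico t (t + m))).filter
      fun p => natAdj G p.1 p.2).card ≤ matEx m (AH h x hx H) := by
  let M : Fin m → Fin m → Bool := fun i j => decide (natAdj G (s + i) (t + j))
  have hM : ¬ matContains M (AH h x hx H) := by
    rintro ⟨f, g, hf, hg, hfg⟩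
    apply hG
    let F : Fin h → Fin n := fun v =>
      if hv : (v : ℕ) < x then ⟨s + f ⟨v, hv⟩, by have := (f ⟨v, hv⟩).isLt; omega⟩
      else ⟨t + g ⟨v - x, by have := v.isLt; omega⟩, by
        have := (g ⟨v - x, by have := v.isLt; omega⟩).isLt; omega⟩
    have key : ∀ u v : Fin h, H.Adj u v → u < v → G.Adj (F u) (F v) := by
      intro u v huv hlt
      obtain ⟨hu, hv⟩ := hbip u v huv hlt
      have hA := hfg ⟨u, hu⟩ ⟨v - x, by have := v.isLt; omega⟩ (by
        simp only [AH, decide_eq_true_eq]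
        convert huv using 2
        omega)
      simp only [M, decide_eq_true_eq] at hA
      obtain ⟨h1, h2, h3⟩ := hA
      have hv' : ¬ (v : ℕ) < x := by omega
      simp only [F, hu, hv', dif_pos, dif_neg, not_false_eq_true]
      exact h3
    refine ⟨F, ?_, ?_⟩
    · intro u v huv
      have huv' : (u : ℕ) < v := huv
      by_cases hu : (u : ℕ) < x
      · by_cases hv : (v : ℕ) < x
        · have := hf (show (⟨u, hu⟩ : Fin x) < ⟨v, hv⟩ from huv')
          simp only [F, hu, hv, dif_pos]
          rw [Fin.lt_def] at this ⊢
          simp only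
          omega
        · simp only [F, hu, hv, dif_pos, dif_neg, not_false_eq_true]
          rw [Fin.lt_def]
          have := (f ⟨u, hu⟩).isLt
          simp only
          omega
      · have hv : ¬ (v : ℕ) < x := by omega
        have := hg (show (⟨u - x, by have := u.isLt; omega⟩ : Fin (h - x)) <
          ⟨v - x, by have := v.isLt; omega⟩ by rw [Fin.lt_def]; simp only; omega)
        simp only [F, hu, hv, dif_neg, not_false_eq_true]
        rw [Fin.lt_def] at this ⊢
        simp only
        omega
    · intro u v huv
      rcases lt_trichotomy u v with hlt | heq | hgt
      · exact key u v huv hlt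
      · exact absurd heq huv.ne
      · exact (key v u huv.symm hgt).symm
  refine le_trans ?_ (matWeight_le_matEx _ M hM)
  unfold matWeight
  have hsub : (((Finset.Ico s (s + m)) ×ˢ (Finset.Ico t (t + m))).filter
      fun p => natAdj G p.1 p.2) ⊆
      (Finset.univ.filter fun p : Fin m × Fin m => M p.1 p.2 = true).image
        (fun p => (s + (p.1 : ℕ), t + (p.2 : ℕ))) := by
    rintro ⟨i, j⟩ hij
    simp only [Finset.mem_filter, Finset.mem_product, Finset.mem_Ico] at hij
    obtain ⟨⟨hi, hj⟩, ha⟩ := hij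
    rw [Finset.mem_image]
    have e1 : s + (i - s) = i := by omega
    have e2 : t + (j - t) = j := by omega
    refine ⟨(⟨i - s, by omega⟩, ⟨j - t, by omega⟩), ?_, ?_⟩
    · simp only [Finset.mem_filter, Finset.mem_univ, true_and, M, decide_eq_true_eq, e1, e2]
      exact ha
    · simp only [e1, e2]
  exact (Finset.card_le_card hsub).trans Finset.card_image_le

open Classical in
lemma cnt_split (r : ℕ → ℕ → Prop) (s k m : ℕ) (h1 : 2 * m ≤ k) (h2 : k ≤ 2 * m + 1) :
    (cntPairs r s k).card ≤ (cntPairs r s m).card + (cntPairs r (s + (k - m)) m).card +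
      (((Finset.Ico s (s + m)) ×ˢ (Finset.Ico (s + (k - m)) (s + (k - m) + m))).filter
      fun p => r p.1 p.2).card + k := by
  have hsub : cntPairs r s k ⊆ ((cntPairs r s m ∪ cntPairs r (s + (k - m)) m) ∪
      (((Finset.Ico s (s + m)) ×ˢ (Finset.Ico (s + (k - m)) (s + (k - m) + m))).filter
      fun p => r p.1 p.2)) ∪ (Finset.Ico s (s + k)).image
        (fun t => if t < s + m then (t, s + m) else (s + m, t)) := by
    rintro ⟨i, j⟩ hij
    simp only [cntPairs, Finset.mem_filter, Finset.mem_product, Finset.mem_Ico,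
      Finset.mem_union, Finset.mem_image] at hij ⊢
    obtain ⟨⟨hi, hj⟩, hlt, hr⟩ := hij
    by_cases c1 : j = s + m
    · right
      refine ⟨i, hi, ?_⟩
      rw [if_pos (by omega), c1]
    by_cases c2 : i = s + m
    · right
      refine ⟨j, hj, ?_⟩
      rw [if_neg (by omega), c2]
    left
    by_cases c3 : j < s + m
    · left; left
      exact ⟨by omega, hlt, hr⟩
    by_cases c4 : i < s + m
    · right
      exact ⟨by omega, hr⟩
    · left; right
      exact ⟨by omega, hlt, hr⟩
  refine (Finset.card_le_card hsub).trans ?_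
  refine (Finset.card_union_le _ _).trans ?_
  gcongr
  · refine (Finset.card_union_le _ _).trans ?_
    gcongr
    exact Finset.card_union_le _ _
  · refine Finset.card_image_le.trans ?_
    simp

lemma edge_le {n : ℕ} (hn : 0 < n) (G : SimpleGraph (Fin n)) :
    G.edgeSet.ncard ≤ (cntPairs (natAdj G) 0 n).card := by
  classical
  have hsub : G.edgeSet ⊆ (((cntPairs (natAdj G) 0 n).image (fun p : ℕ × ℕ =>
      if hp : p.1 < n ∧ p.2 < n then s((⟨p.1, hp.1⟩ : Fin n), (⟨p.2, hp.2⟩ : Fin n))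
      else s((⟨0, hn⟩ : Fin n), (⟨0, hn⟩ : Fin n))) : Finset (Sym2 (Fin n))) :
        Set (Sym2 (Fin n))) := by
    have key : ∀ u v : Fin n, G.Adj u v → u < v → s(u, v) ∈
      ((cntPairs (natAdj G) 0 n).image (fun p : ℕ × ℕ =>
      if hp : p.1 < n ∧ p.2 < n then s((⟨p.1, hp.1⟩ : Fin n), (⟨p.2, hp.2⟩ : Fin n))
      else s((⟨0, hn⟩ : Fin n), (⟨0, hn⟩ : Fin n)))) := by
      intro u v huv hlt
      rw [Finset.mem_image]
      refine ⟨((u : ℕ), (v : ℕ)), ?_, ?_⟩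
      · simp only [cntPairs, Finset.mem_filter, Finset.mem_product, Finset.mem_Ico]
        have := u.isLt
        have := v.isLt
        exact ⟨by omega, hlt, u.isLt, v.isLt, huv⟩
      · simp
    intro e
    induction e using Sym2.ind with
    | _ u v =>
      intro he
      rw [SimpleGraph.mem_edgeSet] at he
      rw [Finset.mem_coe]
      rcases lt_trichotomy u v with hlt | heq | hgt
      · exact key u v he hlt
      · exact absurd heq he.ne
      · rw [show s(u, v) = s(v, u) from Sym2.eq_swap]
        exact key v u he.symm hgt
  refine (Set.ncard_le_ncard hsub (Finset.finite_toSet _)).trans ?_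
  rw [Set.ncard_coe_finset]
  exact Finset.card_image_le

/-- Let `H` be an ordered bipartite graph (classes `X = {v : v < x} < Y`) and `c > 1` a real
number. If `ex(n, A_H) ≤ C₁ · n^c` for all positive integers `n`, then there is a constant `C₂`
such that `ex_<(n, H) ≤ C₂ · n^c` for all positive integers `n`. -/
theorem statement10 (h x : ℕ) (hx : x ≤ h) (H : SimpleGraph (Fin h))
    (hbip : ∀ u v : Fin h, H.Adj u v → u < v → (u : ℕ) < x ∧ x ≤ (v : ℕ))
    (c : ℝ) (hc : 1 < c) (C₁ : ℝ)
    (hbound : ∀ n : ℕ, 0 < n → (matEx n (AH h x hx H) : ℝ) ≤ C₁ * (n : ℝ) ^ c) :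
    ∃ C₂ : ℝ, ∀ n : ℕ, 0 < n → (ordEx n H : ℝ) ≤ C₂ * (n : ℝ) ^ c := by
  classical
  set C : ℝ := max C₁ 0 with hC
  have hC0 : 0 ≤ C := le_max_right _ _
  set q : ℝ := 2 * ((2 : ℝ) ^ c)⁻¹ with hq
  have h2c : (2 : ℝ) < 2 ^ c := by
    have := Real.rpow_lt_rpow_of_exponent_lt (show (1 : ℝ) < 2 by norm_num) hc
    simpa using this
  have hq1 : 0 < 1 - q := by
    have : q < 1 := by
      rw [hq, ← div_eq_mul_inv, div_lt_one (by linarith)]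
      exact h2c
    linarith
  set D : ℝ := (C + 1) / (1 - q) with hD
  have hD0 : 0 ≤ D := by positivity
  have hDq : D * (1 - q) = C + 1 := div_mul_cancel₀ _ hq1.ne'
  refine ⟨D, fun n hn => ?_⟩
  have main : ∀ G : SimpleGraph (Fin n), ¬ ordContains G H → ∀ k s : ℕ, s + k ≤ n →
      ((cntPairs (natAdj G) s k).card : ℝ) ≤ D * (k : ℝ) ^ c := by
    intro G hG k
    induction k using Nat.strong_induction_on with
    | _ k ih =>
      intro s hs
      by_cases hk : k < 2
      · have : cntPairs (natAdj G) s k = ∅ := by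
          rw [Finset.eq_empty_iff_forall_notMem]
          rintro ⟨i, j⟩ hij
          simp only [cntPairs, Finset.mem_filter, Finset.mem_product, Finset.mem_Ico] at hij
          omega
        rw [this]
        simp only [Finset.card_empty, Nat.cast_zero]
        positivity
      · have hsplit := cnt_split (natAdj G) s k (k / 2) (by omega) (by omega)
        have hcross := cross_le h x hx H hbip G hG s (s + (k - k / 2)) (k / 2)
          (by omega) (by omega)
        have i1 := ih (k / 2) (by omega) s (by omega)
        have i2 := ih (k / 2) (by omega) (s + (k - k / 2)) (by omega)
        have hb := hbound (k / 2) (by omega)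
        have hm0 : (0 : ℝ) ≤ ((k / 2 : ℕ) : ℝ) := Nat.cast_nonneg _
        have hmk : ((k / 2 : ℕ) : ℝ) ≤ (k : ℝ) / 2 := Nat.cast_div_le
        have hk1 : (1 : ℝ) ≤ (k : ℝ) := by exact_mod_cast (by omega : 1 ≤ k)
        have hK : (k : ℝ) ≤ (k : ℝ) ^ c := Real.self_le_rpow_of_one_le hk1 hc.le
        have hP : ((k / 2 : ℕ) : ℝ) ^ c ≤ (k : ℝ) ^ c * ((2 : ℝ) ^ c)⁻¹ := by
          refine (Real.rpow_le_rpow hm0 hmk (by linarith)).trans ?_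
          rw [Real.div_rpow (by linarith) (by norm_num), div_eq_mul_inv]
        have hP2 : ((k / 2 : ℕ) : ℝ) ^ c ≤ (k : ℝ) ^ c :=
          Real.rpow_le_rpow hm0 (by linarith) (by linarith)
        have hP0 : 0 ≤ ((k / 2 : ℕ) : ℝ) ^ c := by positivity
        have hb2 : C₁ * ((k / 2 : ℕ) : ℝ) ^ c ≤ C * (k : ℝ) ^ c :=
          (mul_le_mul_of_nonneg_right (le_max_left _ _) hP0).trans
            (mul_le_mul_of_nonneg_left hP2 hC0)
        have hDP := mul_le_mul_of_nonneg_left hP hD0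
        have hfin := hsplit.trans (Nat.add_le_add_right (Nat.add_le_add_left hcross _) k)
        have hfin' : ((cntPairs (natAdj G) s k).card : ℝ) ≤
            ((cntPairs (natAdj G) s (k / 2)).card : ℝ) +
            ((cntPairs (natAdj G) (s + (k - k / 2)) (k / 2)).card : ℝ) +
            (matEx (k / 2) (AH h x hx H) : ℝ) + (k : ℝ) := by exact_mod_cast hfin
        have e : D * (k : ℝ) ^ c = D * ((k : ℝ) ^ c * ((2 : ℝ) ^ c)⁻¹) +
            D * ((k : ℝ) ^ c * ((2 : ℝ) ^ c)⁻¹) + C * (k : ℝ) ^ c + (k : ℝ) ^ c := by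
          have : D * (k : ℝ) ^ c = D * q * (k : ℝ) ^ c + D * (1 - q) * (k : ℝ) ^ c := by ring
          rw [this, hDq, hq]
          ring
        linarith
  have hB : 0 ≤ D * (n : ℝ) ^ c := by positivity
  have : ordEx n H ≤ ⌊D * (n : ℝ) ^ c⌋₊ := by
    apply csSup_le'
    rintro e ⟨G, hG, rfl⟩
    apply Nat.le_floor
    refine le_trans ?_ (main G hG n 0 (by omega))
    exact_mod_cast edge_le hn G
  exact (Nat.cast_le.mpr this).trans (Nat.floor_le hB)
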